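/- For all nonzero z ∈ ℂ and generic tuples ū (length n), v̄ (length m): f(v̄, ū)·(1−z)^{n}·K^{(z)}_{n,m}(ū | v̄ + c) = (−z)^{n}·(1−z)^{m}·K^{(1/z)}_{m,n}(v̄ | ū), and f(ū, v̄)·(1−z)^{n}·\bar{K}^{(z)}_{n,m}(ū | v̄ − c) = (−z)^{n}·(1−z)^{m}·\bar{K}^{(1/z)}_{m,n}(v̄ | ū). -/

import Mathlib

open scoped BigOperators

noncomputable section

/-- The rational function `g(u,v) = c/(u-v)`. -/
def gC (c u v : ℂ) : ℂ := c / (u - v)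

/-- The rational function `f(u,v) = (u-v+c)/(u-v)`. -/
def fC (c u v : ℂ) : ℂ := (u - v + c) / (u - v)

/-- The rational function `h(u,v) = (u-v+c)/c`. -/
def hC (c u v : ℂ) : ℂ := (u - v + c) / c

/-- A family of parameters is generic if all pairwise differences avoid `0, ±c, ±2c`. -/
def Generic (c : ℂ) {ι : Type*} (w : ι → ℂ) : Prop :=
  ∀ i j, i ≠ j → w i - w j ≠ 0 ∧ w i - w j ≠ c ∧ w i - w j ≠ -c ∧
    w i - w j ≠ 2 * c ∧ w i - w j ≠ -2 * c

/-- The modified Izergin determinant `K^{(z)}(x̄|ȳ)`. -/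
def KIz (c z : ℂ) {ι κ : Type*} [Fintype ι] [Fintype κ] [DecidableEq κ]
    (x : ι → ℂ) (y : κ → ℂ) : ℂ :=
  Matrix.det (Matrix.of fun j k : κ =>
    -z * (if j = k then 1 else 0) +
      (∏ i, fC c (x i) (y j)) * (∏ i ∈ Finset.univ.erase j, fC c (y j) (y i))
        / hC c (y j) (y k))

/-- The conjugated modified Izergin determinant: `c` is replaced by `-c`. -/
def KIzBar (c z : ℂ) {ι κ : Type*} [Fintype ι] [Fintype κ] [DecidableEq κ]
    (x : ι → ℂ) (y : κ → ℂ) : ℂ :=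
  KIz (-c) z x y

/-- Restriction of a tuple to a subtuple indexed by a `Finset`. -/
def restr {p : ℕ} (w : Fin p → ℂ) (s : Finset (Fin p)) : {x // x ∈ s} → ℂ :=
  fun i => w i.1

/-- Double product `f(w̄_s, w̄_t)` over two subtuples of a tuple. -/
def fSS (c : ℂ) {p : ℕ} (w : Fin p → ℂ) (s t : Finset (Fin p)) : ℂ :=
  ∏ i ∈ s, ∏ j ∈ t, fC c (w i) (w j)

/- Multiplication by the Izergin matrix of `v̄ | ū` undoes the translation `t ↦ t - c` on the values
at the points `u_i` of rational functions with simple poles at the points `v_j`. In the basis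
`1 / (t - v_j)`, `t ^ l` this translation is block triangular: reducing `1 / (t - c - v_j)` modulo
the functions that vanish at all `u_i` gives a polar part described by a conjugate of the transposed
Izergin matrix of `ū | v̄ + c`, and the monomials are transformed by a unipotent matrix. Comparing
the characteristic polynomials of the two descriptions gives the inversion relation for
`card κ ≤ card ι`; the other case follows by applying it to `v̄` and `ū - c`. -/

open Polynomial Lagrange Matrix

section CommRing

variable {R m n : Type*} [CommRing R] [Fintype m] [Fintype n]

lemma degree_divByMonic_lt_of_degree_lt_add [Nontrivial R] {p q : R[X]} (hq : q.Monic) {a d : ℕ}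
    (hqa : q.degree = a) (hp : p.degree < (a + d : ℕ)) : (p /ₘ q).degree < d := by
  rcases lt_or_ge p.degree q.degree with hlt | hge
  · rw [(divByMonic_eq_zero_iff hq).2 hlt, degree_zero]
    exact WithBot.bot_lt_coe d
  · rw [← degree_add_divByMonic hq hge, hqa, Nat.cast_add] at hp
    exact lt_of_add_lt_add_left hp

lemma eval_eq_sum_fin {p : R[X]} {d : ℕ} (hp : p.degree < d) (t : R) :
    p.eval t = ∑ j : Fin d, t ^ (j : ℕ) * p.coeff j := by
  rw [eval_eq_sum, ← sum_fin _ (by simp) hp]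
  exact Finset.sum_congr rfl fun j _ => mul_comm _ _

lemma det_sub_smul_mul_det_of_mul_eq [DecidableEq m] [DecidableEq n] {A : Matrix m m R}
    {P : Matrix m n R} {Q : Matrix n m R} {S : Matrix n n R} (hPQ : P * Q = 1)
    (hQP : Q * P = 1) (hA : A * (P * S) = P) (w : R) :
    (A - w • 1).det * S.det = (1 - w • S).det := by
  have hconj : (A - w • 1) * (P * S * Q) = P * (1 - w • S) * Q := by
    rw [sub_mul, ← Matrix.mul_assoc, hA]
    simp [Matrix.mul_sub, Matrix.sub_mul, Matrix.mul_assoc]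
  rw [← det_conj_of_mul_eq_one hPQ hQP (N := S), ← det_mul, hconj,
    det_conj_of_mul_eq_one hPQ hQP]

/-- The matrix of the translation `p(t) ↦ p(t - c)` of polynomials of degree less than `d` in the
basis of monomials. -/
def translationMatrix (c : R) (d : ℕ) : Matrix (Fin d) (Fin d) R :=
  of fun l j => ((X - C c) ^ (j : ℕ)).coeff l

lemma det_smul_one_sub_smul_translationMatrix (a b c : R) (d : ℕ) :
    (a • 1 - b • translationMatrix c d).det = (a - b) ^ d := by
  rw [det_of_isUpperTriangular]
  · have hdiag (j : ℕ) : ((X - C c) ^ j).coeff j = 1 := by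
      rw [sub_eq_add_neg, ← C_neg, coeff_X_add_C_pow]; simp
    simp [translationMatrix, hdiag]
  · intro l j hjl
    have hlt : (j : ℕ) < l := hjl
    simp [translationMatrix, sub_eq_add_neg, ← C_neg, -map_neg, coeff_X_add_C_pow,
      Nat.choose_eq_zero_of_lt hlt, one_apply, Fin.ext_iff, hlt.ne']

lemma det_smul_one_sub_smul_fromBlocks [DecidableEq m] {d : ℕ} {D D' : Matrix m m R}
    (hD : D * D' = 1) (B : Matrix m m R) (H : Matrix (Fin d) m R) (a b c : R) :
    (a • 1 - b • fromBlocks (D * Bᵀ * D') 0 H (translationMatrix c d)).det =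
      (a • 1 - b • B).det * (a - b) ^ d := by
  have hconj : a • 1 - b • (D * Bᵀ * D') = D * (a • 1 - b • B)ᵀ * D' := by
    simp [Matrix.mul_sub, Matrix.sub_mul, hD]
  have hblocks : a • 1 - b • fromBlocks (D * Bᵀ * D') 0 H (translationMatrix c d) =
      fromBlocks (D * (a • 1 - b • B)ᵀ * D') 0 (-(b • H))
        (a • 1 - b • translationMatrix c d) := by
    rw [← hconj, ← fromBlocks_one, fromBlocks_smul, fromBlocks_smul, sub_eq_add_neg,
      fromBlocks_neg, fromBlocks_add]
    simp [sub_eq_add_neg]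
  rw [hblocks, det_fromBlocks_zero₁₂, det_conj_of_mul_eq_one hD (mul_eq_one_comm.1 hD),
    det_transpose, det_smul_one_sub_smul_translationMatrix]

end CommRing

section CauchyVandermonde

variable {F ι κ : Type*} [Field F] [Fintype κ] [DecidableEq κ]

lemma eval_div_eval_nodal {v : κ → F} (hv : Function.Injective v) (g : F[X]) {t : F}
    (ht : ∀ k, t ≠ v k) :
    g.eval t / (nodal Finset.univ v).eval t =
      ∑ k, (t - v k)⁻¹ * (nodalWeight Finset.univ v k * g.eval (v k)) +
        (g /ₘ nodal Finset.univ v).eval t := by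
  set V := nodal Finset.univ v
  have hV : V.eval t ≠ 0 := eval_nodal_not_at_node fun k _ => ht k
  have hdiv (s : F) : (g %ₘ V).eval s + V.eval s * (g /ₘ V).eval s = g.eval s := by
    rw [← eval_mul, ← eval_add, modByMonic_add_div]
  have hnode (k : κ) : (g %ₘ V).eval (v k) = g.eval (v k) := by
    rw [← hdiv, eval_nodal_at_node (Finset.mem_univ k), zero_mul, add_zero]
  have hrem : (g %ₘ V).eval t =
      V.eval t * ∑ k, nodalWeight Finset.univ v k * (t - v k)⁻¹ * g.eval (v k) := by
    rw [← eval_interpolate_not_at_node _ fun k _ => ht k,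
      ← eq_interpolate_of_eval_eq _ hv.injOn _ fun k _ => hnode k]
    exact (degree_modByMonic_lt g nodal_monic).trans_eq degree_nodal
  rw [div_eq_iff hV, ← hdiv t, hrem, ← mul_add, mul_comm]
  congr 2
  exact Finset.sum_congr rfl fun k _ => by ring

lemma inv_sub_eq_eval_div_nodal {v : κ → F} {t : F} (ht : ∀ k, t ≠ v k) (k : κ) :
    (t - v k)⁻¹ = (nodal (Finset.univ.erase k) v).eval t / (nodal Finset.univ v).eval t := by
  have hne : (nodal (Finset.univ.erase k) v).eval t ≠ 0 :=
    eval_nodal_not_at_node fun l _ => ht l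
  rw [nodal_eq_mul_nodal_erase (Finset.mem_univ k), eval_mul, eval_sub, eval_X, eval_C,
    div_mul_cancel_right₀ hne]

/-- The Cauchy–Vandermonde matrix of the points `u`: the rational functions `1/(t - v_k)` and the
monomials `t ^ j`, `j < d`, evaluated at `t = u_i`. For `card ι = card κ + d` it is the square
matrix that completes the rectangular Cauchy matrix of `u` and `v`. -/
def cauchyVandermonde (d : ℕ) (u : ι → F) (v : κ → F) : Matrix ι (κ ⊕ Fin d) F :=
  fromCols (of fun i k => (u i - v k)⁻¹) (of fun i j => u i ^ (j : ℕ))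

lemma cauchyVandermonde_mulVec {d : ℕ} {u : ι → F} {v : κ → F} (hv : Function.Injective v)
    (huv : ∀ i k, u i ≠ v k) {g : F[X]} (hg : g.degree < (Fintype.card κ + d : ℕ)) :
    cauchyVandermonde d u v *ᵥ
        Sum.elim (fun k => nodalWeight Finset.univ v k * g.eval (v k))
          (fun j => (g /ₘ nodal Finset.univ v).coeff j) =
      fun i => g.eval (u i) / (nodal Finset.univ v).eval (u i) := by
  ext i
  have hquot : (g /ₘ nodal Finset.univ v).degree < d :=
    degree_divByMonic_lt_of_degree_lt_add nodal_monic degree_nodal hg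
  rw [eval_div_eval_nodal hv g (huv i), eval_eq_sum_fin hquot, cauchyVandermonde,
    fromCols_mulVec_sumElim]
  rfl

lemma exists_cauchyVandermonde_inverse [Fintype ι] [DecidableEq ι] {d : ℕ} {u : ι → F} {v : κ → F}
    (hcard : Fintype.card ι = Fintype.card κ + d) (hu : Function.Injective u)
    (hv : Function.Injective v) (huv : ∀ i k, u i ≠ v k) :
    ∃ A : Matrix (κ ⊕ Fin d) ι F,
      cauchyVandermonde d u v * A = 1 ∧ A * cauchyVandermonde d u v = 1 := by
  have hsurj : Function.Surjective (cauchyVandermonde d u v).mulVec := by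
    intro b
    set g := interpolate Finset.univ u fun i => b i * (nodal Finset.univ v).eval (u i)
    have hg : g.degree < (Fintype.card κ + d : ℕ) := hcard ▸ degree_interpolate_lt _ hu.injOn
    refine ⟨_, (cauchyVandermonde_mulVec hv huv hg).trans (funext fun i => ?_)⟩
    rw [eval_interpolate_at_node _ hu.injOn (Finset.mem_univ i),
      mul_div_cancel_right₀ _ (eval_nodal_not_at_node fun k _ => huv i k)]
  obtain ⟨A, hA⟩ := mulVec_surjective_iff_exists_right_inverse.1 hsurj
  exact ⟨A, hA, (mul_eq_one_comm_of_card_eq _ _ _ (by simpa using hcard)).1 hA⟩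

lemma exists_diagonal_mul_cauchyVandermonde_inverse [Fintype ι] [DecidableEq ι] {d : ℕ}
    {u : ι → F} {v : κ → F} {a : ι → F} (hcard : Fintype.card ι = Fintype.card κ + d)
    (hu : Function.Injective u) (hv : Function.Injective v) (huv : ∀ i k, u i ≠ v k)
    (ha : ∀ i, a i ≠ 0) :
    ∃ Q : Matrix (κ ⊕ Fin d) ι F, diagonal a * cauchyVandermonde d u v * Q = 1 ∧
      Q * (diagonal a * cauchyVandermonde d u v) = 1 := by
  obtain ⟨A, hCA, hAC⟩ := exists_cauchyVandermonde_inverse hcard hu hv huv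
  refine ⟨A * diagonal fun i => (a i)⁻¹, ?_, ?_⟩
  · rw [Matrix.mul_assoc, ← Matrix.mul_assoc _ A, hCA]
    simp [diagonal_mul_diagonal, ha]
  · rw [Matrix.mul_assoc, ← Matrix.mul_assoc (diagonal _)]
    simp [diagonal_mul_diagonal, ha, hAC]

lemma exists_degree_lt_eval_eq {U V : F[X]} {n : ℕ} (hU : U.degree ≤ n) (hV : V.degree ≤ n)
    {s : F} (hs : U.eval s ≠ 0) :
    ∃ g : F[X], g.degree < n ∧
      ∀ t ≠ s, g.eval t = (V.eval t - V.eval s / U.eval s * U.eval t) / (t - s) := by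
  set W := V - (V.eval s / U.eval s) • U
  have hroot : (X - C s) * (W /ₘ (X - C s)) = W :=
    mul_divByMonic_eq_iff_isRoot.2 (by simp [W, hs])
  refine ⟨W /ₘ (X - C s), ?_, fun t ht => ?_⟩
  · refine degree_divByMonic_lt_of_degree_lt_add (monic_X_sub_C s) (degree_X_sub_C s) ?_
    have hW : W.degree ≤ n :=
      (degree_sub_le_of_le hV ((degree_smul_le _ _).trans hU)).trans_eq (max_self _)
    exact hW.trans_lt (by exact_mod_cast Nat.lt_add_of_pos_left one_pos)
  · rw [eq_div_iff (sub_ne_zero.2 ht), mul_comm]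
    simpa [W] using congrArg (eval t) hroot

end CauchyVandermonde

section Izergin

variable {ι κ : Type*} [Fintype ι] [Fintype κ] [DecidableEq κ]

/-- The matrix `f(x̄, y_j) f(y_j, ȳ_j) / h(y_j, y_k)`, whose characteristic polynomial in `z` is the
modified Izergin determinant up to sign. -/
def izerginMatrix (c : ℂ) (x : ι → ℂ) (y : κ → ℂ) : Matrix κ κ ℂ :=
  of fun j k =>
    (∏ i, fC c (x i) (y j)) * (∏ i ∈ Finset.univ.erase j, fC c (y j) (y i)) / hC c (y j) (y k)

lemma KIz_eq_det (c z : ℂ) (x : ι → ℂ) (y : κ → ℂ) :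
    KIz c z x y = (izerginMatrix c x y - z • 1).det := by
  rw [KIz]
  congr 1
  ext j k
  simp only [izerginMatrix, of_apply, Matrix.sub_apply, Matrix.smul_apply, one_apply, smul_eq_mul]
  ring

lemma KIz_sub_left (c z a : ℂ) (x : ι → ℂ) (y : κ → ℂ) :
    KIz c z (fun i => x i - a) y = KIz c z x fun j => y j + a := by
  simp [KIz, fC, hC, sub_sub, add_comm a]

lemma fC_neg (c a b : ℂ) : fC (-c) a b = fC c b a := by
  rw [fC, fC, ← neg_div_neg_eq]
  congr 1 <;> ring

lemma fC_sub_left (c t a b : ℂ) : fC c (a - t) b = fC c a (b + t) := by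
  rw [fC, fC, sub_sub, add_comm t]

lemma fC_add_eq_inv (c a b : ℂ) : fC c a (b + c) = (fC c b a)⁻¹ := by
  rw [fC, fC, inv_div, ← neg_div_neg_eq]
  congr 1 <;> ring

lemma prod_fC (c : ℂ) (x : ι → ℂ) (t : ℂ) :
    ∏ i, fC c (x i) t = (nodal Finset.univ x).eval (t - c) / (nodal Finset.univ x).eval t := by
  rw [eval_nodal, eval_nodal, ← Finset.prod_div_distrib]
  refine Finset.prod_congr rfl fun i _ => ?_
  rw [fC, ← neg_div_neg_eq]
  congr 1 <;> ring

lemma izerginMatrix_apply {c : ℂ} (hc : c ≠ 0) (x : ι → ℂ) (y : κ → ℂ) (j k : κ) :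
    izerginMatrix c x y j k =
      (∏ i, fC c (x i) (y j)) * nodalWeight Finset.univ y j *
        (nodal Finset.univ y).eval (y j + c) * (y j + c - y k)⁻¹ := by
  have hprod : ∏ i ∈ Finset.univ.erase j, fC c (y j) (y i) =
      nodalWeight Finset.univ y j * (nodal Finset.univ y).eval (y j + c) / c := by
    rw [eval_nodal, ← Finset.mul_prod_erase Finset.univ _ (Finset.mem_univ j), nodalWeight,
      add_sub_cancel_left, mul_left_comm, mul_div_cancel_left₀ _ hc, ← Finset.prod_mul_distrib]
    refine Finset.prod_congr rfl fun i _ => ?_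
    rw [fC, div_eq_inv_mul, sub_add_eq_add_sub]
  rw [izerginMatrix, of_apply, hprod, hC, sub_add_eq_add_sub]
  field_simp

lemma izerginMatrix_mulVec {c : ℂ} (x : ι → ℂ) {y : κ → ℂ} (hy : Function.Injective y)
    (hyc : ∀ j k, y j + c ≠ y k) {p : ℂ[X]} (hp : p.degree < Fintype.card κ) :
    izerginMatrix c x y *ᵥ (fun k => nodalWeight Finset.univ y k * p.eval (y k - c)) =
      fun j => (∏ i, fC c (x i) (y j)) * (nodalWeight Finset.univ y j * p.eval (y j)) := by
  ext j
  have hc : c ≠ 0 := fun h => hyc j j (by rw [h, add_zero])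
  have hQ : (nodal Finset.univ y).eval (y j + c) ≠ 0 := eval_nodal_not_at_node fun k _ => hyc j k
  have hquot : taylor (-c) p /ₘ nodal Finset.univ y = 0 :=
    (divByMonic_eq_zero_iff nodal_monic).2 (by rwa [degree_taylor, degree_nodal])
  -- The row sums are the partial fractions of `p (t - c) / ∏ (t - y_k)` at `t = y_j + c`.
  have hfrac := eval_div_eval_nodal hy (taylor (-c) p) (hyc j)
  simp only [hquot, eval_zero, add_zero, taylor_eval, add_sub_cancel_right, ← sub_eq_add_neg]
    at hfrac
  rw [div_eq_iff hQ] at hfrac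
  simp only [mulVec, dotProduct, izerginMatrix_apply hc, mul_assoc, ← Finset.mul_sum]
  rw [hfrac]
  ring

lemma det_izerginMatrix {c : ℂ} (x : ι → ℂ) {y : κ → ℂ} (hy : Function.Injective y)
    (hyc : ∀ j k, y j + c ≠ y k) :
    (izerginMatrix c x y).det = ∏ j, ∏ i, fC c (x i) (y j) := by
  set e := Fintype.equivFin κ
  set M : (κ → ℂ) → Matrix κ κ ℂ := fun w => (vandermonde (w ∘ e.symm)).submatrix e e
  set D := diagonal (nodalWeight Finset.univ y)
  have hdet : (D * M fun k => y k - c).det = (D * M y).det := by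
    rw [det_mul, det_mul, det_submatrix_equiv_self, det_submatrix_equiv_self,
      ← det_vandermonde_sub (y ∘ e.symm) c]
    rfl
  have hne : (D * M y).det ≠ 0 := by
    rw [det_mul, det_submatrix_equiv_self, det_diagonal]
    exact mul_ne_zero
      (Finset.prod_ne_zero_iff.2 fun k hk => nodalWeight_ne_zero hy.injOn hk)
      (det_vandermonde_ne_zero_iff.2 (hy.comp e.symm.injective))
  have hmul : izerginMatrix c x y * (D * M fun k => y k - c) =
      diagonal (fun j => ∏ i, fC c (x i) (y j)) * (D * M y) := by
    ext j l
    have hX : (X ^ (e l : ℕ) : ℂ[X]).degree < Fintype.card κ := by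
      rw [degree_X_pow]; exact_mod_cast (e l).is_lt
    rw [mul_apply, diagonal_mul]
    simp only [D, diagonal_mul]
    simpa [M, mulVec, dotProduct, vandermonde_apply] using
      congrFun (izerginMatrix_mulVec x hy hyc hX) j
  apply_fun det at hmul
  rw [det_mul, det_mul _ (D * M y), hdet, det_diagonal] at hmul
  exact mul_right_cancel₀ hne hmul

end Izergin

section Translation

variable {ι κ : Type*} {c : ℂ} {u : ι → ℂ} {v : κ → ℂ}

/-- The conditions on the parameters under which the matrices in the inversion relation for
`K(ū | v̄ + c)` and `K(v̄ | ū)` are defined and the relevant Cauchy–Vandermonde matrices are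
invertible. -/
structure ShiftGeneric (c : ℂ) (u : ι → ℂ) (v : κ → ℂ) : Prop where
  injective_left : Function.Injective u
  injective_right : Function.Injective v
  left_add_ne : ∀ i k, u i + c ≠ u k
  right_add_ne : ∀ j k, v j + c ≠ v k
  left_ne_right : ∀ i j, u i ≠ v j
  left_sub_ne_right : ∀ i j, u i - c ≠ v j

lemma ShiftGeneric.swap (h : ShiftGeneric c u v) : ShiftGeneric c v fun i => u i - c where
  injective_left := h.injective_right
  injective_right := sub_left_injective.comp h.injective_left
  left_add_ne := h.right_add_ne
  right_add_ne i k hik := h.left_add_ne i k (by linear_combination hik)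
  left_ne_right j i := (h.left_sub_ne_right i j).symm
  left_sub_ne_right j i hij := h.left_ne_right i j (sub_left_injective hij).symm

lemma ShiftGeneric.fC_ne_zero (h : ShiftGeneric c u v) (i : ι) (j : κ) :
    fC c (v j) (u i) ≠ 0 := by
  have hadd : v j - u i + c ≠ 0 := fun hij =>
    h.left_sub_ne_right i j (by linear_combination -hij)
  exact div_ne_zero hadd (sub_ne_zero.2 (h.left_ne_right i j).symm)

lemma ShiftGeneric.of_pairwise (hc : c ≠ 0)
    (h : Pairwise fun p q => Sum.elim u v p ≠ Sum.elim u v q ∧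
      Sum.elim u v p - Sum.elim u v q ≠ c) : ShiftGeneric c u v := by
  have hinj : Function.Injective (Sum.elim u v) := fun p q hpq =>
    not_not.1 fun hne => (h hne).1 hpq
  have hadd (p q : ι ⊕ κ) : Sum.elim u v q + c ≠ Sum.elim u v p := by
    rcases eq_or_ne p q with rfl | hne
    · simpa using hc
    · exact fun hpq => (h hne).2 (by rw [← hpq, add_sub_cancel_left])
  exact
    { injective_left := hinj.comp Sum.inl_injective
      injective_right := hinj.comp Sum.inr_injective
      left_add_ne := fun i k => hadd (.inl k) (.inl i)
      right_add_ne := fun j k => hadd (.inr k) (.inr j)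
      left_ne_right := fun i j => hinj.ne Sum.inl_ne_inr
      left_sub_ne_right := fun i j hij =>
        hadd (.inl i) (.inr j) (sub_eq_iff_eq_add.1 hij).symm }

variable [Fintype ι] [Fintype κ] {d : ℕ}

/-- The diagonal factor that turns the multiplication by `f(v̄, u_i)` in the Izergin matrix of
`v̄ | ū` into the passage from a polynomial `p` to the rational function `p / ∏ (t - v_k)`. -/
def izerginWeight [DecidableEq ι] (c : ℂ) (u : ι → ℂ) (v : κ → ℂ) (i : ι) : ℂ :=
  nodalWeight Finset.univ u i * (nodal Finset.univ v).eval (u i - c)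

lemma izerginWeight_ne_zero [DecidableEq ι] (h : ShiftGeneric c u v) (i : ι) :
    izerginWeight c u v i ≠ 0 :=
  mul_ne_zero (nodalWeight_ne_zero h.injective_left.injOn (Finset.mem_univ i))
    (eval_nodal_not_at_node fun k _ => h.left_sub_ne_right i k)

lemma izerginMatrix_mulVec_eval_div_nodal [DecidableEq ι] (h : ShiftGeneric c u v) {p : ℂ[X]}
    (hp : p.degree < Fintype.card ι) :
    izerginMatrix c v u *ᵥ (fun i => izerginWeight c u v i *
        (p.eval (u i - c) / (nodal Finset.univ v).eval (u i - c))) =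
      fun i => izerginWeight c u v i * (p.eval (u i) / (nodal Finset.univ v).eval (u i)) := by
  convert izerginMatrix_mulVec v h.injective_left h.left_add_ne hp using 2 with i i
  · ext i
    have hV : (nodal Finset.univ v).eval (u i - c) ≠ 0 :=
      eval_nodal_not_at_node fun k _ => h.left_sub_ne_right i k
    rw [izerginWeight]
    field_simp
  · rw [prod_fC, izerginWeight]
    ring

lemma izerginMatrix_mul_cauchyVandermonde [DecidableEq ι]
    (hcard : Fintype.card ι = Fintype.card κ + d) (h : ShiftGeneric c u v) :
    izerginMatrix c v u *
        (diagonal (izerginWeight c u v) * cauchyVandermonde d (fun i => u i - c) v) =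
      diagonal (izerginWeight c u v) * cauchyVandermonde d u v := by
  classical
  ext i (k | j) <;> rw [mul_apply, diagonal_mul] <;> simp only [diagonal_mul]
  · have hp : (nodal (Finset.univ.erase k) v).degree < Fintype.card ι := by
      rw [degree_nodal, hcard]
      exact_mod_cast (Finset.card_erase_lt_of_mem (Finset.mem_univ k)).trans_le
        (Nat.le_add_right _ _)
    simpa only [mulVec, dotProduct, cauchyVandermonde, fromCols_apply_inl,
      of_apply, inv_sub_eq_eval_div_nodal (h.left_ne_right _) k,
      inv_sub_eq_eval_div_nodal (h.left_sub_ne_right _) k]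
      using congrFun (izerginMatrix_mulVec_eval_div_nodal h hp) i
  · have hp : (nodal Finset.univ v * X ^ (j : ℕ) : ℂ[X]).degree < Fintype.card ι := by
      rw [degree_mul, degree_nodal, degree_X_pow, hcard]
      exact_mod_cast Nat.add_lt_add_left j.is_lt _
    have hV (i : ι) : (nodal Finset.univ v).eval (u i) ≠ 0 :=
      eval_nodal_not_at_node fun k _ => h.left_ne_right i k
    have hVc (i : ι) : (nodal Finset.univ v).eval (u i - c) ≠ 0 :=
      eval_nodal_not_at_node fun k _ => h.left_sub_ne_right i k
    simpa only [mulVec, dotProduct, cauchyVandermonde, fromCols_apply_inr,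
      of_apply, eval_mul, eval_pow, eval_X, mul_div_cancel_left₀ _ (hV _),
      mul_div_cancel_left₀ _ (hVc _)]
      using congrFun (izerginMatrix_mulVec_eval_div_nodal h hp) i

/-- The diagonal factor that conjugates the transposed Izergin matrix of `ū | v̄ + c` into the
matrix by which the translation `t ↦ t - c` acts on the polar parts at `v̄`. -/
def polarWeight [DecidableEq κ] (u : ι → ℂ) (v : κ → ℂ) (k : κ) : ℂ :=
  nodalWeight Finset.univ v k * (nodal Finset.univ u).eval (v k)

lemma polarWeight_ne_zero [DecidableEq κ] (h : ShiftGeneric c u v) (k : κ) :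
    polarWeight u v k ≠ 0 :=
  mul_ne_zero (nodalWeight_ne_zero h.injective_right.injOn (Finset.mem_univ k))
    (eval_nodal_not_at_node fun i _ => (h.left_ne_right i k).symm)

lemma izerginMatrix_add_apply [DecidableEq κ] (hc : c ≠ 0) (u : ι → ℂ) (v : κ → ℂ) (k l : κ) :
    izerginMatrix c u (fun j => v j + c) k l =
      polarWeight u v k * ((nodal Finset.univ v).eval (v k + c) /
        (nodal Finset.univ u).eval (v k + c) * (v k + c - v l)⁻¹) := by
  have hweight : nodalWeight Finset.univ (fun j => v j + c) k = nodalWeight Finset.univ v k := by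
    simp [nodalWeight]
  have heval : (nodal Finset.univ fun j => v j + c).eval (v k + c + c) =
      (nodal Finset.univ v).eval (v k + c) := by
    simp [eval_nodal]
  rw [izerginMatrix_apply hc, prod_fC, hweight, heval, polarWeight, add_sub_cancel_right,
    add_sub_add_right_eq_sub]
  ring

lemma exists_cauchyVandermonde_mulVec_eq_inv [DecidableEq κ]
    (hcard : Fintype.card ι = Fintype.card κ + d) (h : ShiftGeneric c u v) (k : κ) :
    ∃ a : Fin d → ℂ,
      cauchyVandermonde d u v *ᵥ Sum.elim (fun l => polarWeight u v l *
          izerginMatrix c u (fun j => v j + c) k l * (polarWeight u v k)⁻¹) a =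
        fun i => (u i - c - v k)⁻¹ := by
  have hc : c ≠ 0 := fun hc => h.right_add_ne k k (by rw [hc, add_zero])
  set U := nodal Finset.univ u
  set V := nodal Finset.univ v
  set s := v k + c
  have hus (i : ι) : u i ≠ s := fun hi => h.left_sub_ne_right i k (sub_eq_iff_eq_add.2 hi)
  have hU : U.degree ≤ (Fintype.card κ + d : ℕ) := (degree_nodal.trans (by simp [hcard])).le
  have hV : V.degree ≤ (Fintype.card κ + d : ℕ) :=
    degree_nodal.trans_le (by exact_mod_cast Nat.le_add_right _ _)
  obtain ⟨g, hg, hgt⟩ :=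
    exists_degree_lt_eval_eq hU hV (eval_nodal_not_at_node fun i _ => (hus i).symm)
  refine ⟨fun j => (g /ₘ V).coeff j, ?_⟩
  convert cauchyVandermonde_mulVec h.injective_right h.left_ne_right hg using 2 with i
  · congr 1
    ext l
    have hVl : V.eval (v l) = 0 := eval_nodal_at_node (Finset.mem_univ l)
    rw [izerginMatrix_add_apply hc, hgt _ (h.right_add_ne k l).symm, hVl, zero_sub,
      ← neg_sub s, neg_div_neg_eq, polarWeight]
    have hk := polarWeight_ne_zero h k
    field_simp
    simp only [s, U, V]
    ring
  · have hUi : U.eval (u i) = 0 := eval_nodal_at_node (Finset.mem_univ i)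
    have hVi : V.eval (u i) ≠ 0 := eval_nodal_not_at_node fun l _ => h.left_ne_right i l
    rw [hgt _ (hus i), hUi, mul_zero, sub_zero, div_right_comm, div_self hVi, one_div, sub_sub,
      add_comm c]

lemma exists_cauchyVandermonde_sub_eq [DecidableEq κ]
    (hcard : Fintype.card ι = Fintype.card κ + d) (h : ShiftGeneric c u v) :
    ∃ H : Matrix (Fin d) κ ℂ,
      cauchyVandermonde d (fun i => u i - c) v = cauchyVandermonde d u v *
        fromBlocks (diagonal (polarWeight u v) * (izerginMatrix c u fun j => v j + c)ᵀ *
          diagonal fun k => (polarWeight u v k)⁻¹) 0 H (translationMatrix c d) := by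
  choose H hH using exists_cauchyVandermonde_mulVec_eq_inv hcard h
  refine ⟨of fun j k => H k j, ?_⟩
  ext i (k | j)
  · rw [mul_apply, Fintype.sum_sum_type]
    simpa [cauchyVandermonde, mulVec, dotProduct, diagonal_mul, mul_diagonal] using
      (congrFun (hH k) i).symm
  · have hdeg : ((X - C c) ^ (j : ℕ) : ℂ[X]).degree < d := by
      simp [degree_pow, degree_X_sub_C]
    simpa [cauchyVandermonde, mul_apply, translationMatrix] using eval_eq_sum_fin hdeg (u i)

lemma KIz_mul_prod_fC [DecidableEq ι] [DecidableEq κ]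
    (hcard : Fintype.card ι = Fintype.card κ + d) (h : ShiftGeneric c u v) (w : ℂ) :
    KIz c w v u * ∏ j, ∏ i, fC c (u i) (v j + c) =
      (1 - w • izerginMatrix c u fun j => v j + c).det * (1 - w) ^ d := by
  have hpolar (k : κ) : polarWeight u v k ≠ 0 := polarWeight_ne_zero h k
  obtain ⟨Q, hPQ, hQP⟩ := exists_diagonal_mul_cauchyVandermonde_inverse hcard h.injective_left
    h.injective_right h.left_ne_right (izerginWeight_ne_zero h)
  obtain ⟨H, hH⟩ := exists_cauchyVandermonde_sub_eq hcard h
  set B := izerginMatrix c u fun j => v j + c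
  set P := diagonal (izerginWeight c u v) * cauchyVandermonde d u v
  set S := fromBlocks (diagonal (polarWeight u v) * Bᵀ * diagonal fun k => (polarWeight u v k)⁻¹)
    0 H (translationMatrix c d)
  have hmul : izerginMatrix c v u * (P * S) = P := by
    rw [Matrix.mul_assoc, ← hH, izerginMatrix_mul_cauchyVandermonde hcard h]
  have hS (a b : ℂ) : (a • 1 - b • S).det = (a • 1 - b • B).det * (a - b) ^ d :=
    det_smul_one_sub_smul_fromBlocks (by simp [diagonal_mul_diagonal, hpolar]) B H a b c
  have hdetS : S.det = ∏ j, ∏ i, fC c (u i) (v j + c) := by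
    rw [← det_izerginMatrix u (fun j l hjl => h.injective_right (add_right_cancel hjl))
      fun j l hjl => h.right_add_ne j l (add_right_cancel hjl)]
    simpa using hS 0 (-1)
  rw [KIz_eq_det, ← hdetS, det_sub_smul_mul_det_of_mul_eq hPQ hQP hmul]
  simpa using hS 1 w

end Translation

section Inversion

variable {ι κ : Type*} [Fintype ι] [Fintype κ] {c z : ℂ} {u : ι → ℂ} {v : κ → ℂ}

lemma neg_pow_mul_one_sub_inv_pow (hz : z ≠ 0) (k : ℕ) :
    (-z) ^ k * (1 - z⁻¹) ^ k = (1 - z) ^ k := by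
  rw [← mul_pow]
  congr 1
  field_simp
  ring

lemma KIz_inversion_of_card_eq_add [DecidableEq ι] [DecidableEq κ] {d : ℕ}
    (hcard : Fintype.card ι = Fintype.card κ + d) (h : ShiftGeneric c u v) (hz : z ≠ 0) :
    (∏ j, ∏ i, fC c (v j) (u i)) * (1 - z) ^ Fintype.card ι * KIz c z u (fun j => v j + c) =
      (-z) ^ Fintype.card ι * (1 - z) ^ Fintype.card κ * KIz c z⁻¹ v u := by
  have hf : ∏ j, ∏ i, fC c (v j) (u i) ≠ 0 :=
    Finset.prod_ne_zero_iff.2 fun j _ => Finset.prod_ne_zero_iff.2 fun i _ => h.fC_ne_zero i j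
  have hdet : (-z) ^ Fintype.card κ *
      (1 - z⁻¹ • izerginMatrix c u fun j => v j + c).det = KIz c z u fun j => v j + c := by
    rw [KIz_eq_det, ← det_smul]
    simp [smul_smul, hz, sub_eq_add_neg, add_comm]
  have hmain := KIz_mul_prod_fC hcard h z⁻¹
  simp only [fC_add_eq_inv, Finset.prod_inv_distrib] at hmain
  rw [← div_eq_mul_inv, div_eq_iff hf] at hmain
  rw [hmain, hcard, pow_add, pow_add, ← neg_pow_mul_one_sub_inv_pow hz d, ← hdet]
  ring

lemma KIz_inversion [DecidableEq ι] [DecidableEq κ] (h : ShiftGeneric c u v) (hz : z ≠ 0) :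
    (∏ j, ∏ i, fC c (v j) (u i)) * (1 - z) ^ Fintype.card ι * KIz c z u (fun j => v j + c) =
      (-z) ^ Fintype.card ι * (1 - z) ^ Fintype.card κ * KIz c z⁻¹ v u := by
  rcases le_total (Fintype.card κ) (Fintype.card ι) with hle | hle
  · obtain ⟨d, hd⟩ := Nat.exists_eq_add_of_le hle
    exact KIz_inversion_of_card_eq_add hd h hz
  · obtain ⟨d, hd⟩ := Nat.exists_eq_add_of_le hle
    have hswap := KIz_inversion_of_card_eq_add hd h.swap (inv_ne_zero hz)
    have hf : ∏ i, ∏ j, fC c (v j) (u i) ≠ 0 :=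
      Finset.prod_ne_zero_iff.2 fun i _ => Finset.prod_ne_zero_iff.2 fun j _ => h.fC_ne_zero i j
    simp only [KIz_sub_left, fC_sub_left, fC_add_eq_inv, Finset.prod_inv_distrib, inv_inv,
      sub_add_cancel] at hswap
    have hneg : (-z) ^ Fintype.card κ * (-z⁻¹) ^ Fintype.card κ = 1 := by
      rw [← mul_pow, neg_mul_neg, mul_inv_cancel₀ hz, one_pow]
    rw [Finset.prod_comm, ← neg_pow_mul_one_sub_inv_pow hz (Fintype.card ι),
      ← neg_pow_mul_one_sub_inv_pow hz (Fintype.card κ)]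
    set f := ∏ i, ∏ j, fC c (v j) (u i)
    set K := KIz c z u fun j => v j + c
    calc f * ((-z) ^ Fintype.card ι * (1 - z⁻¹) ^ Fintype.card ι) * K
        = f * (-z) ^ Fintype.card ι * (-z) ^ Fintype.card κ *
            ((-z⁻¹) ^ Fintype.card κ * (1 - z⁻¹) ^ Fintype.card ι * K) := by
          linear_combination (-f * (-z) ^ Fintype.card ι * (1 - z⁻¹) ^ Fintype.card ι * K) * hneg
      _ = (-z) ^ Fintype.card ι * ((-z) ^ Fintype.card κ * (1 - z⁻¹) ^ Fintype.card κ) *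
            KIz c z⁻¹ v u := by
          rw [← hswap]
          field_simp

theorem stmt14_general [DecidableEq ι] [DecidableEq κ] (hc : c ≠ 0) (hz : z ≠ 0)
    (hgen : Pairwise fun p q => Sum.elim u v p ≠ Sum.elim u v q ∧
      Sum.elim u v p - Sum.elim u v q ≠ c) :
    (∏ j, ∏ i, fC c (v j) (u i)) * (1 - z) ^ Fintype.card ι * KIz c z u (fun j => v j + c) =
        (-z) ^ Fintype.card ι * (1 - z) ^ Fintype.card κ * KIz c z⁻¹ v u ∧
      (∏ i, ∏ j, fC c (u i) (v j)) * (1 - z) ^ Fintype.card ι *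
          KIzBar c z u (fun j => v j - c) =
        (-z) ^ Fintype.card ι * (1 - z) ^ Fintype.card κ * KIzBar c z⁻¹ v u := by
  refine ⟨KIz_inversion (.of_pairwise hc hgen) hz, ?_⟩
  have hbar := KIz_inversion (.of_pairwise (neg_ne_zero.2 hc) fun p q hpq =>
    ⟨(hgen hpq).1, fun h => (hgen hpq.symm).2 (by rw [← neg_sub, h, neg_neg])⟩) hz
  rw [Finset.prod_comm]
  simpa only [KIzBar, fC_neg, ← sub_eq_add_neg] using hbar

lemma Generic.pairwise_sumElim {n m : ℕ} {u : Fin n → ℂ} {v : Fin m → ℂ}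
    (h : Generic c (Fin.append u v)) :
    Pairwise fun p q => Sum.elim u v p ≠ Sum.elim u v q ∧
      Sum.elim u v p - Sum.elim u v q ≠ c := by
  have happend (p : Fin n ⊕ Fin m) : Sum.elim u v p = Fin.append u v (finSumFinEquiv p) := by
    cases p <;> simp
  intro p q hpq
  obtain ⟨hne, hnc, -⟩ := h _ _ (finSumFinEquiv.injective.ne hpq)
  rw [happend, happend]
  exact ⟨sub_ne_zero.1 hne, hnc⟩

end Inversion

/-- Inversion relation for the modified Izergin determinant with shifted arguments. -/
theorem stmt14
    (c : ℂ) (hc : c ≠ 0) (z : ℂ) (hz : z ≠ 0) (n m : ℕ)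
    (u : Fin n → ℂ) (v : Fin m → ℂ)
    (hgen : Generic c (Fin.append u v)) :
    (∏ j, ∏ i, fC c (v j) (u i)) * (1 - z) ^ n * KIz c z u (fun j => v j + c)
        = (-z) ^ n * (1 - z) ^ m * KIz c z⁻¹ v u ∧
      (∏ i, ∏ j, fC c (u i) (v j)) * (1 - z) ^ n * KIzBar c z u (fun j => v j - c)
        = (-z) ^ n * (1 - z) ^ m * KIzBar c z⁻¹ v u := by
  simpa only [Fintype.card_fin] using stmt14_general hc hz hgen.pairwise_sumElim
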